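/- arXiv:math-ph/0610085 — 7 statements merged into one kernel-verified Lean document; each statement's English description precedes it below -/
import Mathlib

section
/- Let X be a topological space, Ω ⊆ X a subset, and n ≥ 2 a natural number. If the boundary of the closure of Ω is nonempty, then the Visser n-splitting Split(X, Ω, n) is not a Hausdorff topological space; more precisely, for any point x in the boundary of cl(Ω) and any two distinct indices i ≠ j, the two copies xᵢ and xⱼ of x cannot be separated: every open set containing xᵢ meets every open set containing xⱼ. -/
/-- The underlying set of the Visser n-splitting `Split(X, Ω, n)`: the disjoint union of
`X \ cl(Ω)` with `n` disjoint copies of the closure `cl(Ω)`. -/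
def VisserSplit (X : Type*) [TopologicalSpace X] (Ω : Set X) (n : ℕ) : Type _ :=
  {x : X // x ∉ closure Ω} ⊕ (Fin n × {x : X // x ∈ closure Ω})

open Classical in
/-- The i-th injection `φᵢ : X → Split(X, Ω, n)`, sending points of `X \ cl(Ω)` to themselves
and each point of `cl(Ω)` to its i-th copy. -/
noncomputable def visserEmb (X : Type*) [TopologicalSpace X] (Ω : Set X) (n : ℕ) (i : Fin n)
    (x : X) : VisserSplit X Ω n :=
  if h : x ∈ closure Ω then Sum.inr (i, ⟨x, h⟩) else Sum.inl ⟨x, h⟩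

/-- The natural topology of `Split(X, Ω, n)`: the one generated by the basis consisting of
all the sets `φᵢ(U)` with `U` open in `X` and `i ∈ {1, …, n}`. -/
noncomputable instance (X : Type*) [TopologicalSpace X] (Ω : Set X) (n : ℕ) :
    TopologicalSpace (VisserSplit X Ω n) :=
  TopologicalSpace.generateFrom
    {s | ∃ (i : Fin n) (U : Set X), IsOpen U ∧ s = visserEmb X Ω n i '' U}

/-!
Off `cl Ω` all the injections `φᵢ` agree, and each `φᵢ` is continuous because the preimage under
`φᵢ` of a basic open set `φⱼ(U)` is `U` if `i = j` and `U \ cl Ω` otherwise. A boundary point `x` of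
`cl Ω` is a limit of points outside `cl Ω`; along these, `φᵢ = φⱼ` tends to both `xᵢ` and `xⱼ`.
-/

open Filter Topology

theorem neBot_nhds_inf_nhds_of_eqOn {X Y : Type*} [TopologicalSpace X] [TopologicalSpace Y]
    {f g : X → Y} {s : Set X} {x : X} (hfg : Set.EqOn f g s) (hx : x ∈ closure s)
    (hf : ContinuousWithinAt f s x) (hg : ContinuousWithinAt g s x) :
    NeBot (𝓝 (f x) ⊓ 𝓝 (g x)) := by
  have hs : NeBot (𝓝[s] x) := mem_closure_iff_nhdsWithin_neBot.1 hx
  have hf_to_g : Tendsto f (𝓝[s] x) (𝓝 (g x)) :=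
    hg.congr' (hfg.symm.eventuallyEq_of_mem self_mem_nhdsWithin)
  exact (hs.map f).mono (le_inf hf hf_to_g)

section VisserSplit

variable {X : Type*} [TopologicalSpace X] {Ω : Set X} {n : ℕ} {i j : Fin n} {x y : X}

theorem visserEmb_of_mem (hx : x ∈ closure Ω) :
    visserEmb X Ω n i x = Sum.inr (i, ⟨x, hx⟩) :=
  dif_pos hx

theorem visserEmb_of_notMem (hx : x ∉ closure Ω) : visserEmb X Ω n i x = Sum.inl ⟨x, hx⟩ :=
  dif_neg hx

theorem visserEmb_eq_visserEmb_iff :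
    visserEmb X Ω n i x = visserEmb X Ω n j y ↔ x = y ∧ (x ∈ closure Ω → i = j) := by
  by_cases hx : x ∈ closure Ω <;> by_cases hy : y ∈ closure Ω
  · rw [visserEmb_of_mem hx, visserEmb_of_mem hy]
    exact Sum.inr_injective.eq_iff.trans (by simp [hx, and_comm])
  · rw [visserEmb_of_mem hx, visserEmb_of_notMem hy]
    exact iff_of_false Sum.inr_ne_inl fun h => hy (h.1 ▸ hx)
  · rw [visserEmb_of_notMem hx, visserEmb_of_mem hy]
    exact iff_of_false Sum.inl_ne_inr fun h => hx (h.1 ▸ hy)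
  · rw [visserEmb_of_notMem hx, visserEmb_of_notMem hy]
    exact Sum.inl_injective.eq_iff.trans (by simp [hx])

theorem visserEmb_injective (i : Fin n) : Function.Injective (visserEmb X Ω n i) :=
  fun _ _ h => (visserEmb_eq_visserEmb_iff.1 h).1

theorem visserEmb_eqOn_compl_closure (i j : Fin n) :
    Set.EqOn (visserEmb X Ω n i) (visserEmb X Ω n j) (closure Ω)ᶜ :=
  fun _ hx => visserEmb_eq_visserEmb_iff.2 ⟨rfl, fun h => absurd h hx⟩

theorem visserEmb_preimage_image_of_ne (hij : i ≠ j) (U : Set X) :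
    visserEmb X Ω n i ⁻¹' (visserEmb X Ω n j '' U) = U \ closure Ω := by
  ext x
  simp [visserEmb_eq_visserEmb_iff, hij.symm]

theorem continuous_visserEmb (i : Fin n) : Continuous (visserEmb X Ω n i) := by
  refine continuous_generateFrom_iff.2 ?_
  rintro _ ⟨j, U, hU, rfl⟩
  obtain rfl | hij := eq_or_ne i j
  · rwa [(visserEmb_injective i).preimage_image]
  · rw [visserEmb_preimage_image_of_ne hij]
    exact hU.sdiff isClosed_closure

theorem neBot_nhds_visserEmb_inf_nhds_visserEmb (hx : x ∈ frontier (closure Ω)) (i j : Fin n) :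
    NeBot (𝓝 (visserEmb X Ω n i x) ⊓ 𝓝 (visserEmb X Ω n j x)) :=
  have hx_compl : x ∈ closure (closure Ω)ᶜ :=
    (frontier_eq_closure_inter_closure.subset hx).2
  neBot_nhds_inf_nhds_of_eqOn (visserEmb_eqOn_compl_closure i j) hx_compl
    (continuous_visserEmb i).continuousWithinAt (continuous_visserEmb j).continuousWithinAt

end VisserSplit

/-- If the boundary of `cl(Ω)` is nonempty and `n ≥ 2`, the Visser splitting `Split(X, Ω, n)`
is not Hausdorff; more precisely any two distinct copies `xᵢ`, `xⱼ` of a point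
`x ∈ ∂(cl Ω)` cannot be separated by open sets. -/
theorem visserSplit_not_hausdorff (X : Type*) [TopologicalSpace X] (Ω : Set X) (n : ℕ)
    (hn : 2 ≤ n) (hfr : (frontier (closure Ω)).Nonempty) :
    ¬ T2Space (VisserSplit X Ω n) ∧
    ∀ x ∈ frontier (closure Ω), ∀ i j : Fin n, i ≠ j →
      ∀ O₁ O₂ : Set (VisserSplit X Ω n), IsOpen O₁ → IsOpen O₂ →
        visserEmb X Ω n i x ∈ O₁ → visserEmb X Ω n j x ∈ O₂ → (O₁ ∩ O₂).Nonempty := by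
  refine ⟨fun _ => ?_, fun x hx i j _ O₁ O₂ hO₁ hO₂ hi hj => ?_⟩
  · obtain ⟨x, hx⟩ := hfr
    have : Nontrivial (Fin n) := Fin.nontrivial_iff_two_le.2 hn
    obtain ⟨i, j, hij⟩ := exists_pair_ne (Fin n)
    have hx_eq : visserEmb X Ω n i x = visserEmb X Ω n j x :=
      eq_of_nhds_neBot (neBot_nhds_visserEmb_inf_nhds_visserEmb hx i j)
    exact hij ((visserEmb_eq_visserEmb_iff.1 hx_eq).2 (isClosed_closure.frontier_subset hx))
  · have := neBot_nhds_visserEmb_inf_nhds_visserEmb hx i j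
    exact nonempty_of_mem (inter_mem_inf (hO₁.mem_nhds hi) (hO₂.mem_nhds hj))
end

section
/- Let X be a Hausdorff topological space, Ω ⊆ X a subset, and n ≥ 2 a natural number. Let ∼ be the equivalence relation on Split(X, Ω, n) generated by identifying, for all i ≠ j, the i-th copy xᵢ and the j-th copy xⱼ of each point x lying in the boundary of Ω. Then the McCabe splitting, namely the quotient topological space Split(X, Ω, n)/∼ with the quotient topology, is Hausdorff. -/
/-- The McCabe equivalence relation on `Split(X, Ω, n)`: the equivalence relation generated
by identifying, for `i ≠ j`, the i-th copy `xᵢ` and the j-th copy `xⱼ` of each point `x`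
lying in the boundary of `Ω`. -/
def mcCabeSetoid (X : Type*) [TopologicalSpace X] (Ω : Set X) (n : ℕ) :
    Setoid (VisserSplit X Ω n) :=
  Relation.EqvGen.setoid (fun a b => ∃ (x : X) (hx : x ∈ closure Ω) (i j : Fin n), i ≠ j ∧
    x ∈ frontier Ω ∧ a = Sum.inr (i, ⟨x, hx⟩) ∧ b = Sum.inr (j, ⟨x, hx⟩))

/-!
The map from the McCabe splitting to `X` that forgets the index of the copy is continuous, so two
points over distinct points of `X` are separated by preimages of open sets of `X`. Two distinct
points over the same `x` force `x ∈ interior Ω`, since over every other point the copies are equal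
or glued; they are then separated by two sheets `φᵢ(interior Ω)` and `φⱼ(interior Ω)`, which the
gluing leaves open and disjoint.
-/

open Set

theorem t2Space_of_continuous_of_isSeparatedMap {X Y : Type*} [TopologicalSpace X]
    [TopologicalSpace Y] [T2Space Y] {f : X → Y} (hf : Continuous f) (hsep : IsSeparatedMap f) :
    T2Space X where
  t2 x y hxy := by
    by_cases h : f x = f y
    · exact hsep x y h hxy
    · exact separated_by_continuous hf h

section

variable {X : Type*} [TopologicalSpace X] {Ω : Set X} {n : ℕ}

namespace VisserSplit

/-- The projection `Split(X, Ω, n) → X` forgetting the index of the copy; it is the common left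
inverse of the injections `φᵢ`. -/
def proj : VisserSplit X Ω n → X :=
  Sum.elim Subtype.val fun p => p.2.val

theorem visserEmb_of_mem_closure {x : X} (hx : x ∈ closure Ω) (i : Fin n) :
    visserEmb X Ω n i x = Sum.inr (i, ⟨x, hx⟩) :=
  dif_pos hx

theorem visserEmb_of_notMem_closure {x : X} (hx : x ∉ closure Ω) (i : Fin n) :
    visserEmb X Ω n i x = Sum.inl ⟨x, hx⟩ :=
  dif_neg hx

@[simp]
theorem proj_visserEmb (i : Fin n) (x : X) : proj (visserEmb X Ω n i x) = x := by
  by_cases hx : x ∈ closure Ω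
  · rw [visserEmb_of_mem_closure hx]
    rfl
  · rw [visserEmb_of_notMem_closure hx]
    rfl

theorem exists_visserEmb_eq [NeZero n] (a : VisserSplit X Ω n) :
    ∃ i x, visserEmb X Ω n i x = a := by
  rcases a with ⟨x, hx⟩ | ⟨i, x, hx⟩
  · exact ⟨0, x, visserEmb_of_notMem_closure hx 0⟩
  · exact ⟨i, x, visserEmb_of_mem_closure hx i⟩

theorem isOpenMap_visserEmb (i : Fin n) : IsOpenMap (visserEmb X Ω n i) :=
  fun U hU => TopologicalSpace.isOpen_generateFrom_of_mem ⟨i, U, hU, rfl⟩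

theorem preimage_proj_eq_iUnion_image_visserEmb [NeZero n] (U : Set X) :
    (proj ⁻¹' U : Set (VisserSplit X Ω n)) = ⋃ i, visserEmb X Ω n i '' U := by
  ext a
  obtain ⟨i, x, rfl⟩ := exists_visserEmb_eq a
  simp only [mem_preimage, proj_visserEmb, mem_iUnion]
  constructor
  · exact fun hx => ⟨i, mem_image_of_mem _ hx⟩
  · rintro ⟨j, y, hy, hyx⟩
    obtain rfl : y = x := by simpa using congrArg proj hyx
    exact hy

theorem continuous_proj [NeZero n] : Continuous (proj : VisserSplit X Ω n → X) where
  isOpen_preimage U hU := by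
    rw [preimage_proj_eq_iUnion_image_visserEmb]
    exact isOpen_iUnion fun i => isOpenMap_visserEmb i U hU

theorem disjoint_image_visserEmb {i j : Fin n} (hij : i ≠ j) {U : Set X} (hU : U ⊆ closure Ω)
    (V : Set X) : Disjoint (visserEmb X Ω n i '' U) (visserEmb X Ω n j '' V) := by
  rw [Set.disjoint_left]
  rintro _ ⟨x, hx, rfl⟩ ⟨y, -, hyx⟩
  obtain rfl : y = x := by simpa using congrArg proj hyx
  rw [visserEmb_of_mem_closure (hU hx), visserEmb_of_mem_closure (hU hx)] at hyx
  exact hij (congrArg Prod.fst (Sum.inr.inj hyx)).symm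

end VisserSplit

open VisserSplit

theorem mcCabeSetoid_visserEmb_of_notMem_interior {x : X} (hx : x ∉ interior Ω) (i j : Fin n) :
    mcCabeSetoid X Ω n (visserEmb X Ω n i x) (visserEmb X Ω n j x) := by
  by_cases hcl : x ∈ closure Ω
  · rcases eq_or_ne i j with rfl | hij
    · exact .refl _
    · exact .rel _ _ ⟨x, hcl, i, j, hij, ⟨hcl, hx⟩, visserEmb_of_mem_closure hcl i,
        visserEmb_of_mem_closure hcl j⟩
  · rw [visserEmb_of_notMem_closure hcl, visserEmb_of_notMem_closure hcl]
    exact .refl _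

theorem proj_eq_of_mcCabeSetoid {a b : VisserSplit X Ω n} (h : mcCabeSetoid X Ω n a b) :
    proj a = proj b := by
  induction h with
  | rel a b h =>
    obtain ⟨x, hx, i, j, -, -, rfl, rfl⟩ := h
    rfl
  | refl a => rfl
  | symm a b _ ih => exact ih.symm
  | trans a b c _ _ ihab ihbc => exact ihab.trans ihbc

theorem eq_of_mcCabeSetoid_of_proj_mem_interior {a b : VisserSplit X Ω n}
    (h : mcCabeSetoid X Ω n a b) (ha : proj a ∈ interior Ω) : a = b := by
  induction h with
  | rel a b h =>
    obtain ⟨x, hx, i, j, -, hfr, rfl, rfl⟩ := h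
    exact absurd ha hfr.2
  | refl a => rfl
  | symm a b hab ih => exact (ih (proj_eq_of_mcCabeSetoid hab ▸ ha)).symm
  | trans a b c hab _ ihab ihbc =>
    exact (ihab ha).trans (ihbc (proj_eq_of_mcCabeSetoid hab ▸ ha))

/-- The projection from the McCabe splitting to `X` induced by `VisserSplit.proj`. -/
def mcCabeProj : Quotient (mcCabeSetoid X Ω n) → X :=
  Quotient.lift proj fun _ _ => proj_eq_of_mcCabeSetoid

theorem continuous_mcCabeProj [NeZero n] :
    Continuous (mcCabeProj : Quotient (mcCabeSetoid X Ω n) → X) :=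
  continuous_proj.quotient_lift _

theorem preimage_image_mk_of_subset_preimage_interior {V : Set (VisserSplit X Ω n)}
    (hV : V ⊆ proj ⁻¹' interior Ω) :
    Quotient.mk (mcCabeSetoid X Ω n) ⁻¹' (Quotient.mk _ '' V) = V := by
  refine Subset.antisymm ?_ (subset_preimage_image _ V)
  rintro b ⟨a, ha, hab⟩
  obtain rfl : a = b :=
    eq_of_mcCabeSetoid_of_proj_mem_interior (Quotient.exact hab) (hV ha)
  exact ha

variable (Ω) in
/-- The `i`-th copy of `interior Ω` in the McCabe splitting. -/
def mcCabeSheet (i : Fin n) : Set (Quotient (mcCabeSetoid X Ω n)) :=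
  Quotient.mk _ '' (visserEmb X Ω n i '' interior Ω)

theorem preimage_mk_mcCabeSheet (i : Fin n) :
    Quotient.mk _ ⁻¹' mcCabeSheet Ω i = visserEmb X Ω n i '' interior Ω := by
  refine preimage_image_mk_of_subset_preimage_interior ?_
  rintro _ ⟨x, hx, rfl⟩
  simpa using hx

theorem isOpen_mcCabeSheet (i : Fin n) : IsOpen (mcCabeSheet Ω i) := by
  have hpre : IsOpen (Quotient.mk (mcCabeSetoid X Ω n) ⁻¹' mcCabeSheet Ω i) := by
    rw [preimage_mk_mcCabeSheet]
    exact isOpenMap_visserEmb i _ isOpen_interior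
  exact isOpen_coinduced.2 hpre

theorem disjoint_mcCabeSheet {i j : Fin n} (hij : i ≠ j) :
    Disjoint (mcCabeSheet Ω i) (mcCabeSheet Ω j) := by
  refine Disjoint.of_preimage Quotient.mk_surjective ?_
  rw [preimage_mk_mcCabeSheet, preimage_mk_mcCabeSheet]
  exact disjoint_image_visserEmb hij interior_subset_closure _

theorem isSeparatedMap_mcCabeProj [NeZero n] :
    IsSeparatedMap (mcCabeProj : Quotient (mcCabeSetoid X Ω n) → X) := by
  rintro ⟨a⟩ ⟨b⟩ hproj hne
  obtain ⟨i, x, rfl⟩ := exists_visserEmb_eq a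
  obtain ⟨j, y, rfl⟩ := exists_visserEmb_eq b
  obtain rfl : x = y := by simpa [mcCabeProj] using hproj
  have hij : i ≠ j := by
    rintro rfl
    exact hne rfl
  have hx : x ∈ interior Ω := by
    by_contra hx
    exact hne (Quotient.sound (mcCabeSetoid_visserEmb_of_notMem_interior hx i j))
  exact ⟨mcCabeSheet Ω i, mcCabeSheet Ω j, isOpen_mcCabeSheet i, isOpen_mcCabeSheet j,
    mem_image_of_mem _ (mem_image_of_mem _ hx), mem_image_of_mem _ (mem_image_of_mem _ hx),
    disjoint_mcCabeSheet hij⟩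

end

/-- If `X` is Hausdorff and `n ≥ 2`, the McCabe n-splitting of `X` through `Ω`, i.e. the
quotient of the Visser splitting `Split(X, Ω, n)` by the identification of the copies of the
boundary points of `Ω`, endowed with the quotient topology, is Hausdorff. -/
theorem mcCabeSplit_t2Space (X : Type*) [TopologicalSpace X] [T2Space X] (Ω : Set X)
    (n : ℕ) (hn : 2 ≤ n) : T2Space (Quotient (mcCabeSetoid X Ω n)) := by
  have : NeZero n := ⟨by omega⟩
  exact t2Space_of_continuous_of_isSeparatedMap continuous_mcCabeProj isSeparatedMap_mcCabeProj
end

section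
/- Let f : ℝ → ℝ be smooth (C^∞), let a, b ∈ ℝ, and suppose there exists a global solution x̃ₐ of ẋ = f(x) with x̃ₐ(0) = a. Then there exists a pair of global solutions g₁, g₂ of ẋ = f(x) with g₁(t) = g₂(t) for all t < 0, g₁(0) = a and g₂(0) = b, if and only if a = b; in that case the pair is unique and g₁ = g₂ = x̃ₐ. (This expresses that on the Visser splitting Split(ℝ, [0, +∞), 2) the generalized Cauchy problem with the two initial conditions x(0₁) = a, x(0₂) = b imposed at the two copies of the splitting point is well-posed if and only if the consistency condition a = b holds.) -/
/-- `g : ℝ → ℝ` is a global solution of the autonomous ODE `ẋ = f(x)`: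
it is differentiable at every `t` with derivative `g'(t) = f(g(t))`. -/
def IsGlobalSolution (f g : ℝ → ℝ) : Prop := ∀ t : ℝ, HasDerivAt g (f (g t)) t

/-!
Solutions are continuous, so two branches that agree on `(-∞, 0)` agree at `0` as well: this forces
`a = b`. Conversely, the set of times at which two global solutions of a locally Lipschitz equation
agree is closed by continuity and open by Grönwall's inequality, so a solution is determined by its
value at one time, and both branches are the given one.
-/

open Set Filter Topology
open scoped NNReal

section LocallyLipschitzField

variable {E : Type*} [PseudoEMetricSpace E]

/-- The Cauchy–Lipschitz condition on a time-dependent vector field: near every time and every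
point, `v` is Lipschitz in the space variable with a constant independent of time. No continuity in
time is part of the notion: it serves uniqueness, not existence, of integral curves. -/
def IsLocallyLipschitzField (v : ℝ → E → E) : Prop :=
  ∀ t x, ∃ K : ℝ≥0, ∃ s ∈ 𝓝 x, ∀ᶠ τ in 𝓝 t, LipschitzOnWith K (v τ) s

theorem isLocallyLipschitzField_const {f : E → E} (hf : LocallyLipschitz f) :
    IsLocallyLipschitzField fun _ ↦ f := fun _ x ↦
  let ⟨K, s, hs, hK⟩ := hf x
  ⟨K, s, hs, .of_forall fun _ ↦ hK⟩

end LocallyLipschitzField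

section IntegralCurve

variable {E : Type*} [NormedAddCommGroup E] [NormedSpace ℝ E]
  {v : ℝ → E → E} {γ γ' : ℝ → E} {t₀ : ℝ}

theorem isIntegralCurveAt_eventuallyEq_of_lipschitzOnWith {K : ℝ≥0} {s : Set E}
    (hs : s ∈ 𝓝 (γ t₀)) (hv : ∀ᶠ t in 𝓝 t₀, LipschitzOnWith K (v t) s)
    (hγ : IsIntegralCurveAt γ v t₀) (hγ' : IsIntegralCurveAt γ' v t₀) (h : γ t₀ = γ' t₀) :
    γ =ᶠ[𝓝 t₀] γ' :=
  have hγs : ∀ᶠ t in 𝓝 t₀, γ t ∈ s := hγ.continuousAt hs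
  have hγs' : ∀ᶠ t in 𝓝 t₀, γ' t ∈ s := hγ'.continuousAt (h ▸ hs)
  ODE_solution_unique_of_eventually hv (hγ.and hγs) (hγ'.and hγs') h

theorem isIntegralCurve_eq_of_isLocallyLipschitzField (hv : IsLocallyLipschitzField v)
    (hγ : IsIntegralCurve γ v) (hγ' : IsIntegralCurve γ' v) (h : γ t₀ = γ' t₀) : γ = γ' := by
  have agree_closed : IsClosed {t | γ t = γ' t} := isClosed_eq hγ.continuous hγ'.continuous
  have agree_open : IsOpen {t | γ t = γ' t} := isOpen_iff_mem_nhds.2 fun t ht ↦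
    let ⟨_, _, hs, hK⟩ := hv t (γ t)
    isIntegralCurveAt_eventuallyEq_of_lipschitzOnWith hs hK
      (hγ.isIntegralCurveAt t) (hγ'.isIntegralCurveAt t) ht
  have agree_univ : {t | γ t = γ' t} = univ := IsClopen.eq_univ ⟨agree_closed, agree_open⟩ ⟨t₀, h⟩
  exact funext (eq_univ_iff_forall.1 agree_univ)

theorem isIntegralCurve_apply_eq_of_eqOn_Iio (hγ : IsIntegralCurve γ v)
    (hγ' : IsIntegralCurve γ' v) (h : EqOn γ γ' (Iio t₀)) : γ t₀ = γ' t₀ :=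
  have h_closure : EqOn γ γ' (closure (Iio t₀)) := h.closure hγ.continuous hγ'.continuous
  h_closure (closure_Iio t₀ ▸ self_mem_Iic)

theorem generalized_cauchy_split_ray_general (hv : IsLocallyLipschitzField v) {a b : E}
    {x : ℝ → E} (hx : IsIntegralCurve x v) (hxa : x t₀ = a) :
    ((∃ g₁ g₂ : ℝ → E, IsIntegralCurve g₁ v ∧ IsIntegralCurve g₂ v ∧
        EqOn g₁ g₂ (Iio t₀) ∧ g₁ t₀ = a ∧ g₂ t₀ = b) ↔ a = b) ∧
    (a = b → ∀ g₁ g₂ : ℝ → E, IsIntegralCurve g₁ v → IsIntegralCurve g₂ v →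
      g₁ t₀ = a → g₂ t₀ = b → g₁ = x ∧ g₂ = x) := by
  refine ⟨⟨?consistent, ?solvable⟩, ?unique⟩
  case consistent =>
    rintro ⟨g₁, g₂, h₁, h₂, h_past, rfl, rfl⟩
    exact isIntegralCurve_apply_eq_of_eqOn_Iio h₁ h₂ h_past
  case solvable =>
    rintro rfl
    exact ⟨x, x, hx, hx, eqOn_refl x _, hxa, hxa⟩
  case unique =>
    rintro rfl g₁ g₂ h₁ h₂ hg₁ hg₂
    exact ⟨isIntegralCurve_eq_of_isLocallyLipschitzField hv h₁ hx (hg₁.trans hxa.symm),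
      isIntegralCurve_eq_of_isLocallyLipschitzField hv h₂ hx (hg₂.trans hxa.symm)⟩

end IntegralCurve

/-- On the Visser splitting `Split(ℝ, [0,+∞), 2)`, the generalized Cauchy problem with the
two initial conditions `x(0₁) = a`, `x(0₂) = b` imposed at the two copies of the splitting
point is well-posed if and only if the consistency condition `a = b` holds; in that case the
pair of branch solutions is unique, both branches coinciding with the ordinary solution
`xa` with `xa(0) = a`. -/
theorem generalized_cauchy_split_ray (f : ℝ → ℝ) (hf : ContDiff ℝ (⊤ : ℕ∞) f) (a b : ℝ)
    (xa : ℝ → ℝ) (hxa : IsGlobalSolution f xa) (hxa0 : xa 0 = a) :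
    ((∃ g₁ g₂ : ℝ → ℝ, IsGlobalSolution f g₁ ∧ IsGlobalSolution f g₂ ∧
        (∀ t : ℝ, t < 0 → g₁ t = g₂ t) ∧ g₁ 0 = a ∧ g₂ 0 = b) ↔ a = b) ∧
    (a = b → ∀ g₁ g₂ : ℝ → ℝ, IsGlobalSolution f g₁ → IsGlobalSolution f g₂ →
      (∀ t : ℝ, t < 0 → g₁ t = g₂ t) → g₁ 0 = a → g₂ 0 = b →
      (∀ t : ℝ, g₁ t = xa t) ∧ (∀ t : ℝ, g₂ t = xa t)) := by
  have hv : IsLocallyLipschitzField fun _ ↦ f :=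
    isLocallyLipschitzField_const (hf.of_le (mod_cast le_top)).locallyLipschitz
  obtain ⟨h_solvable, h_unique⟩ := generalized_cauchy_split_ray_general hv (b := b) hxa hxa0
  exact ⟨h_solvable, fun hab g₁ g₂ h₁ h₂ _ hg₁ hg₂ ↦
    (h_unique hab g₁ g₂ h₁ h₂ hg₁ hg₂).imp congrFun congrFun⟩
end

section
/- Let f : ℝ → ℝ be smooth (C^∞), let x̃ be a global solution of ẋ = f(x), and let t_in ≥ 0. If g₁ and g₂ are global solutions of ẋ = f(x) such that g₁(t) = g₂(t) for all t < 0 and g₁(t_in) = x̃(t_in), then g₁ = g₂ = x̃ everywhere on ℝ. (This expresses that on the Visser splitting Split(ℝ, [0, +∞), 2) the Cauchy problem with initial time on the first future branch is well-posed: the solution on the first branch allows retrodiction on the common past (−∞, 0), from which the solution on the second branch is determined.) -/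
open Filter Set Topology

section LocallyLipschitzInState

variable {E : Type*} [PseudoEMetricSpace E]

/-- The time-dependent vector field `v` is locally Lipschitz in the state variable, which is the
Picard–Lindelöf hypothesis for uniqueness of integral curves. The Lipschitz constant and the
neighbourhood of the state are uniform over nearby times. -/
def IsLocallyLipschitzInState (v : ℝ → E → E) : Prop :=
  ∀ t x, ∃ K, ∃ s ∈ 𝓝 x, ∀ᶠ t' in 𝓝 t, LipschitzOnWith K (v t') s

theorem isLocallyLipschitzInState_const {f : E → E} (hf : LocallyLipschitz f) :
    IsLocallyLipschitzInState fun _ : ℝ ↦ f := fun _ x ↦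
  let ⟨K, s, hs, hfs⟩ := hf x
  ⟨K, s, hs, Eventually.of_forall fun _ ↦ hfs⟩

end LocallyLipschitzInState

section IntegralCurveUniqueness

variable {E : Type*} [NormedAddCommGroup E] [NormedSpace ℝ E]
  {v : ℝ → E → E} {γ γ' : ℝ → E} {t₀ : ℝ}

theorem isIntegralCurveAt_eventuallyEq {K : NNReal} {s : Set E} (hs : s ∈ 𝓝 (γ t₀))
    (hv : ∀ᶠ t in 𝓝 t₀, LipschitzOnWith K (v t) s) (hγ : IsIntegralCurveAt γ v t₀)
    (hγ' : IsIntegralCurveAt γ' v t₀) (h : γ t₀ = γ' t₀) : γ =ᶠ[𝓝 t₀] γ' :=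
  have hγs : ∀ᶠ t in 𝓝 t₀, γ t ∈ s := hγ.continuousAt.eventually_mem hs
  have hγs' : ∀ᶠ t in 𝓝 t₀, γ' t ∈ s := hγ'.continuousAt.eventually_mem (h ▸ hs)
  ODE_solution_unique_of_eventually hv (hγ.and hγs) (hγ'.and hγs') h

theorem isOpen_setOf_eq_of_isIntegralCurve (hv : IsLocallyLipschitzInState v)
    (hγ : IsIntegralCurve γ v) (hγ' : IsIntegralCurve γ' v) : IsOpen {t | γ t = γ' t} := by
  refine isOpen_iff_mem_nhds.2 fun t ht ↦ ?_
  obtain ⟨K, s, hs, hvs⟩ := hv t (γ t)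
  exact isIntegralCurveAt_eventuallyEq hs hvs (hγ.isIntegralCurveAt t) (hγ'.isIntegralCurveAt t) ht

theorem isIntegralCurve_eq_of_isLocallyLipschitzInState (hv : IsLocallyLipschitzInState v)
    (hγ : IsIntegralCurve γ v) (hγ' : IsIntegralCurve γ' v) (h : γ t₀ = γ' t₀) : γ = γ' := by
  have hclopen : IsClopen {t | γ t = γ' t} :=
    ⟨isClosed_eq hγ.continuous hγ'.continuous, isOpen_setOf_eq_of_isIntegralCurve hv hγ hγ'⟩
  exact funext (eq_univ_iff_forall.1 (hclopen.eq_univ ⟨t₀, h⟩))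

/-- Here `past` is the part of time left unsplit: the splitting is `Split(ℝ, pastᶜ, 2)`. -/
theorem cauchy_wellPosed_initial_after_split_general (hv : IsLocallyLipschitzInState v)
    {x g₁ g₂ : ℝ → E} (hx : IsIntegralCurve x v) (hg₁ : IsIntegralCurve g₁ v)
    (hg₂ : IsIntegralCurve g₂ v) {past : Set ℝ} (hpast : past.Nonempty)
    (hagree : EqOn g₁ g₂ past) (hinit : g₁ t₀ = x t₀) : g₁ = x ∧ g₂ = x := by
  obtain ⟨t, ht⟩ := hpast
  have first_branch : g₁ = x := isIntegralCurve_eq_of_isLocallyLipschitzInState hv hg₁ hx hinit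
  have branches_eq : g₁ = g₂ :=
    isIntegralCurve_eq_of_isLocallyLipschitzInState hv hg₁ hg₂ (hagree ht)
  exact ⟨first_branch, branches_eq ▸ first_branch⟩

end IntegralCurveUniqueness

/-- Well-posedness of the Cauchy problem on the Visser splitting `Split(ℝ, [0,+∞), 2)` of
time with initial time `t_in ≥ 0` on the first future branch: an ℝ-valued function on the
splitting is a pair `(g₁, g₂)` of global solutions agreeing on `(−∞, 0)`; if the first
branch matches the ordinary solution `xT` at `t_in`, then both branch functions coincide
with `xT` everywhere (retrodiction on the common past determines the second branch). -/
theorem cauchy_wellPosed_initial_after_split (f : ℝ → ℝ) (hf : ContDiff ℝ (⊤ : ℕ∞) f)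
    (xT g₁ g₂ : ℝ → ℝ) (hx : IsGlobalSolution f xT)
    (hg₁ : IsGlobalSolution f g₁) (hg₂ : IsGlobalSolution f g₂)
    (t_in : ℝ) (ht : 0 ≤ t_in) (hagree : ∀ t : ℝ, t < 0 → g₁ t = g₂ t)
    (hinit : g₁ t_in = xT t_in) :
    (∀ t : ℝ, g₁ t = xT t) ∧ (∀ t : ℝ, g₂ t = xT t) := by
  have hv := isLocallyLipschitzInState_const (hf.of_le (mod_cast le_top)).locallyLipschitz
  have h := cauchy_wellPosed_initial_after_split_general hv hx hg₁ hg₂ nonempty_Iio hagree hinit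
  exact h.imp congrFun congrFun
end

section
/- Let f : ℝ → ℝ be smooth (C^∞), let x̃ be a global solution of ẋ = f(x), let t_in ∈ ℝ, and let g₁, …, g_m (m ≥ 1) be finitely many global solutions of ẋ = f(x) such that for every pair of indices k, l there exists c ∈ ℝ with g_k(t) = g_l(t) for all t < c. If g₁(t_in) = x̃(t_in), then g_k = x̃ everywhere on ℝ for every k = 1, …, m. (This expresses that on a temporal tree — a time axis subjected to finitely many iterated Visser splittings, on which an ℝ-valued function corresponds to one branch function per maximal branch, any two branch functions agreeing on the common initial ray of time preceding their branching — the Cauchy problem ẋ = f(x), x(t_in) = x̃(t_in) is well-posed, admitting one and only one solution.) -/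
/-!
Near a time where the field is Lipschitz in space, Grönwall's inequality makes two integral curves
that agree at that time agree around it. So the set of times at which two solutions agree is open as
well as closed, and connectedness of the time axis turns one common value into equality
everywhere. Sharing a past thus already forces two branches to coincide: each branch meets the
reference solution once, through the branch that carries the initial condition.
-/

open Set Filter Topology

section IntegralCurves

variable {E : Type*} [NormedAddCommGroup E] [NormedSpace ℝ E]

/-- The Cauchy–Lipschitz condition at `(t₀, x₀)`: near `x₀`, the time-dependent vector field `v` is
Lipschitz in space, with a constant that is uniform in time near `t₀`. -/
def LipschitzInSpaceAt (v : ℝ → E → E) (t₀ : ℝ) (x₀ : E) : Prop :=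
  ∃ K, ∃ s ∈ 𝓝 x₀, ∀ᶠ t in 𝓝 t₀, LipschitzOnWith K (v t) s

theorem lipschitzInSpaceAt_of_contDiffAt {f : E → E} {x₀ : E} (hf : ContDiffAt ℝ 1 f x₀) (t₀ : ℝ) :
    LipschitzInSpaceAt (fun _ ↦ f) t₀ x₀ := by
  obtain ⟨K, s, hs, hK⟩ := hf.exists_lipschitzOnWith
  exact ⟨K, s, hs, .of_forall fun _ ↦ hK⟩

variable {v : ℝ → E → E} {γ γ' : ℝ → E} {t₀ : ℝ} {U : Set ℝ}

theorem isIntegralCurveAt_eventuallyEq_of_lipschitzInSpaceAt (hv : LipschitzInSpaceAt v t₀ (γ t₀))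
    (hγ : IsIntegralCurveAt γ v t₀) (hγ' : IsIntegralCurveAt γ' v t₀) (heq : γ t₀ = γ' t₀) :
    γ =ᶠ[𝓝 t₀] γ' := by
  obtain ⟨K, s, hs, hK⟩ := hv
  have hγs : ∀ᶠ t in 𝓝 t₀, γ t ∈ s := hγ.continuousAt hs
  have hγs' : ∀ᶠ t in 𝓝 t₀, γ' t ∈ s := hγ'.continuousAt (heq ▸ hs)
  exact ODE_solution_unique_of_eventually (s := fun _ ↦ s) hK (hγ.and hγs) (hγ'.and hγs') heq

theorem isIntegralCurveOn_eqOn_of_lipschitzInSpaceAt (hU : IsOpen U) (hUc : IsPreconnected U)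
    (hv : ∀ t ∈ U, LipschitzInSpaceAt v t (γ t)) (hγ : IsIntegralCurveOn γ v U)
    (hγ' : IsIntegralCurveOn γ' v U) (ht₀ : t₀ ∈ U) (heq : γ t₀ = γ' t₀) : EqOn γ γ' U := by
  have hγAt : ∀ t ∈ U, IsIntegralCurveAt γ v t :=
    fun t ht ↦ hγ.isIntegralCurveAt (hU.mem_nhds ht)
  have hγAt' : ∀ t ∈ U, IsIntegralCurveAt γ' v t :=
    fun t ht ↦ hγ'.isIntegralCurveAt (hU.mem_nhds ht)
  let A : Set ℝ := U ∩ {t | γ t = γ' t}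
  have isOpen_A : IsOpen A := isOpen_iff_mem_nhds.mpr fun t ⟨ht, h⟩ ↦
    inter_mem (hU.mem_nhds ht)
      (isIntegralCurveAt_eventuallyEq_of_lipschitzInSpaceAt (hv t ht) (hγAt t ht) (hγAt' t ht) h)
  have closure_A : closure A ∩ U ⊆ A := fun t ⟨htA, ht⟩ ↦
    ⟨ht, tendsto_nhds_unique_of_frequently_eq (hγAt t ht).continuousAt (hγAt' t ht).continuousAt
      ((mem_closure_iff_frequently.mp htA).mono fun _ h ↦ h.2)⟩
  have subset_A : U ⊆ A :=
    hUc.subset_of_closure_inter_subset isOpen_A ⟨t₀, ht₀, ht₀, heq⟩ closure_A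
  exact fun t ht ↦ (subset_A ht).2

theorem isIntegralCurve_eq_of_lipschitzInSpaceAt (hv : ∀ t, LipschitzInSpaceAt v t (γ t))
    (hγ : IsIntegralCurve γ v) (hγ' : IsIntegralCurve γ' v) (heq : γ t₀ = γ' t₀) : γ = γ' :=
  eqOn_univ γ γ' |>.mp <| isIntegralCurveOn_eqOn_of_lipschitzInSpaceAt
    isOpen_univ isPreconnected_univ (fun t _ ↦ hv t) (hγ.isIntegralCurveOn univ)
    (hγ'.isIntegralCurveOn univ) (mem_univ t₀) heq

theorem cauchy_wellPosed_temporal_tree_general {ι : Type*} {x : ℝ → E} {g : ι → ℝ → E}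
    {k₀ : ι} (hv : ∀ t, LipschitzInSpaceAt v t (x t)) (hx : IsIntegralCurve x v)
    (hg : ∀ k, IsIntegralCurve (g k) v)
    (hmeet : ∀ k, ∃ t, g k t = g k₀ t) (hinit : g k₀ t₀ = x t₀) (k : ι) : g k = x := by
  have base_eq : x = g k₀ :=
    isIntegralCurve_eq_of_lipschitzInSpaceAt hv hx (hg k₀) hinit.symm
  obtain ⟨t, ht⟩ := hmeet k
  have branch_meets : x t = g k t := by rw [base_eq, ht]
  exact (isIntegralCurve_eq_of_lipschitzInSpaceAt hv hx (hg k) branch_meets).symm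

end IntegralCurves

/-- Well-posedness of the Cauchy problem on a temporal tree: an ℝ-valued function on the
tree is a finite family `g₁, …, g_m` of global solutions (one per maximal branch), any two
of which agree on a common initial ray `(−∞, c)`; if one branch function matches the
ordinary solution `xT` at the initial time `t_in`, then every branch function coincides
with `xT` everywhere, i.e. the Cauchy problem admits one and only one solution. -/
theorem cauchy_wellPosed_temporal_tree (f : ℝ → ℝ) (hf : ContDiff ℝ (⊤ : ℕ∞) f)
    (xT : ℝ → ℝ) (hx : IsGlobalSolution f xT) (t_in : ℝ)
    (m : ℕ) (hm : 1 ≤ m) (g : Fin m → ℝ → ℝ)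
    (hg : ∀ k : Fin m, IsGlobalSolution f (g k))
    (hagree : ∀ k l : Fin m, ∃ c : ℝ, ∀ t : ℝ, t < c → g k t = g l t)
    (hinit : g ⟨0, hm⟩ t_in = xT t_in) :
    ∀ (k : Fin m) (t : ℝ), g k t = xT t := by
  have hLip (t : ℝ) : LipschitzInSpaceAt (fun _ ↦ f) t (xT t) :=
    lipschitzInSpaceAt_of_contDiffAt (hf.contDiffAt.of_le (mod_cast le_top)) t
  have hmeet (k : Fin m) : ∃ t, g k t = g ⟨0, hm⟩ t :=
    (hagree k ⟨0, hm⟩).imp' (· - 1) fun c hc ↦ hc _ (sub_one_lt c)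
  exact fun k ↦ congrFun (cauchy_wellPosed_temporal_tree_general hLip hx hg hmeet hinit k)
end

section
/- Let f : ℝ → ℝ be smooth (C^∞), let τ ∈ ℝ, let b ≥ 2, let a₁, …, a_b ∈ ℝ, and suppose there exists a global solution x̃ of ẋ = f(x) with x̃(τ) = a₁. Then there exist global solutions g₁, …, g_b of ẋ = f(x) such that g_k(t) = g_l(t) for all t < τ and all k, l, and g_k(τ) = a_k for each k, if and only if a₁ = a₂ = ⋯ = a_b. (This expresses that on a temporal tree the generalized Cauchy problem prescribing the b initial values a₁, …, a_b at the b copies of a time-division point τ is well-posed if and only if all the prescribed values are identical.) -/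
open Set

theorem isGlobalSolution_iff_isIntegralCurve {f g : ℝ → ℝ} :
    IsGlobalSolution f g ↔ IsIntegralCurve g fun _ ↦ f :=
  Iff.rfl

theorem eqOn_Iic_of_eqOn_Iio {α β : Type*} [TopologicalSpace α] [LinearOrder α] [OrderTopology α]
    [DenselyOrdered α] [NoMinOrder α] [TopologicalSpace β] [T2Space β] {u v : α → β} {τ : α}
    (hu : Continuous u) (hv : Continuous v) (huv : EqOn u v (Iio τ)) : EqOn u v (Iic τ) :=
  closure_Iio τ ▸ huv.closure hu hv

theorem generalized_cauchy_time_division_general {E ι : Type*} [NormedAddCommGroup E]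
    [NormedSpace ℝ E] {v : ℝ → E → E} {τ : ℝ} {a : ι → E} {x : ℝ → E} {i₀ : ι}
    (hx : IsIntegralCurve x v) (hxτ : x τ = a i₀) :
    (∃ g : ι → ℝ → E, (∀ k, IsIntegralCurve (g k) v) ∧
      (∀ k l, ∀ t < τ, g k t = g l t) ∧ ∀ k, g k τ = a k) ↔ ∀ k l, a k = a l := by
  constructor
  · rintro ⟨g, hg, hpast, hval⟩ k l
    have hτ : g k τ = g l τ :=
      eqOn_Iic_of_eqOn_Iio (hg k).continuous (hg l).continuous (hpast k l) self_mem_Iic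
    rwa [hval, hval] at hτ
  · intro ha
    exact ⟨fun _ ↦ x, fun _ ↦ hx, fun _ _ _ _ ↦ rfl, fun k ↦ hxτ.trans (ha i₀ k)⟩

/-- On a temporal tree, the generalized Cauchy problem prescribing the `b` initial values
`a₁, …, a_b` at the `b` copies of a time-division point `τ` — i.e. asking for `b` branch
global solutions agreeing on the common past `(−∞, τ)` with `g_k(τ) = a_k` — is well-posed
if and only if all the prescribed values are identical (given that some global solution `xT`
realizes the first value `a₁` at `τ`). -/
theorem generalized_cauchy_time_division (f : ℝ → ℝ) (hf : ContDiff ℝ (⊤ : ℕ∞) f)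
    (τ : ℝ) (b : ℕ) (hb : 2 ≤ b) (a : Fin b → ℝ)
    (xT : ℝ → ℝ) (hx : IsGlobalSolution f xT) (hxτ : xT τ = a ⟨0, by omega⟩) :
    (∃ g : Fin b → ℝ → ℝ, (∀ k : Fin b, IsGlobalSolution f (g k)) ∧
      (∀ k l : Fin b, ∀ t : ℝ, t < τ → g k t = g l t) ∧
      (∀ k : Fin b, g k τ = a k)) ↔ (∀ k l : Fin b, a k = a l) := by
  simp only [isGlobalSolution_iff_isIntegralCurve] at hx ⊢
  exact generalized_cauchy_time_division_general hx hxτ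
end

section
/- Let f : ℝ → ℝ be smooth (C^∞), let t_in ≤ 0, let a₁, a₂ ∈ ℝ, and suppose there exists a global solution x̃ of ẋ = f(x) with x̃(t_in) = a₁. Then there exist global solutions g₁, g₂ of ẋ = f(x) with g₁(t) = g₂(t) for all t > 0, g₁(t_in) = a₁ and g₂(t_in) = a₂, if and only if a₁ = a₂; in that case g₁ = g₂ = x̃. (This expresses that on the Visser splitting Split(ℝ, (−∞, 0], 2), in which two disjoint past branches merge at time 0 — a time-sticking — the generalized Cauchy problem prescribing the value a₁ at time t_in on the first past branch and a₂ at time t_in on the second past branch is well-posed if and only if a₁ = a₂, this being necessary and sufficient for the merging of the solutions of the two branches on (0, +∞).) -/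
/-!
The times at which two integral curves agree form a closed set by continuity, and an open set by
local uniqueness of solutions, so two curves that agree once agree always. Backward uniqueness
therefore obstructs a sticking of distinct histories: two branches that share a single time of
their common future already share their whole past.
-/

open Filter Set
open scoped Topology NNReal

theorem eq_of_continuous_of_eventuallyEq {X Y : Type*} [TopologicalSpace X] [PreconnectedSpace X]
    [TopologicalSpace Y] [T2Space Y] {g h : X → Y} (hg : Continuous g) (hh : Continuous h)
    (hlocal : ∀ x, g x = h x → g =ᶠ[𝓝 x] h) {x₀ : X} (h₀ : g x₀ = h x₀) : g = h := by
  have agreement_closed : IsClosed {x | g x = h x} := isClosed_eq hg hh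
  have agreement_open : IsOpen {x | g x = h x} := isOpen_iff_mem_nhds.2 hlocal
  have agreement_univ := IsClopen.eq_univ ⟨agreement_closed, agreement_open⟩ ⟨x₀, h₀⟩
  exact funext (eq_univ_iff_forall.1 agreement_univ)

section IntegralCurve

variable {E : Type*} [NormedAddCommGroup E]

/-- A time-dependent vector field that is locally Lipschitz in the state variable, locally
uniformly in time: the hypothesis of the Cauchy–Lipschitz uniqueness theorem. The
neighbourhood `s` and the constant `K` serve all times near `t`. -/
def LocallyLipschitzInState (v : ℝ → E → E) : Prop :=
  ∀ t x, ∃ K : ℝ≥0, ∃ s ∈ 𝓝 x, ∀ᶠ t' in 𝓝 t, LipschitzOnWith K (v t') s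

theorem locallyLipschitzInState_const {f : E → E} (hf : LocallyLipschitz f) :
    LocallyLipschitzInState fun _ ↦ f := fun _ x ↦
  let ⟨K, s, hs, hK⟩ := hf x
  ⟨K, s, hs, .of_forall fun _ ↦ hK⟩

variable [NormedSpace ℝ E] {v : ℝ → E → E} {γ₁ γ₂ : ℝ → E} {t₀ : ℝ}

theorem LocallyLipschitzInState.eventuallyEq_of_isIntegralCurveAt
    (hv : LocallyLipschitzInState v) (hγ₁ : IsIntegralCurveAt γ₁ v t₀)
    (hγ₂ : IsIntegralCurveAt γ₂ v t₀) (h₀ : γ₁ t₀ = γ₂ t₀) : γ₁ =ᶠ[𝓝 t₀] γ₂ := by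
  obtain ⟨K, s, hs, hK⟩ := hv t₀ (γ₁ t₀)
  have γ₁_mem : ∀ᶠ t in 𝓝 t₀, γ₁ t ∈ s := hγ₁.continuousAt.eventually_mem hs
  have γ₂_mem : ∀ᶠ t in 𝓝 t₀, γ₂ t ∈ s := hγ₂.continuousAt.eventually_mem (h₀ ▸ hs)
  exact ODE_solution_unique_of_eventually hK (hγ₁.and γ₁_mem) (hγ₂.and γ₂_mem) h₀

theorem LocallyLipschitzInState.eq_of_isIntegralCurve (hv : LocallyLipschitzInState v)
    (hγ₁ : IsIntegralCurve γ₁ v) (hγ₂ : IsIntegralCurve γ₂ v) (h₀ : γ₁ t₀ = γ₂ t₀) :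
    γ₁ = γ₂ :=
  eq_of_continuous_of_eventuallyEq hγ₁.continuous hγ₂.continuous
    (fun t ↦ hv.eventuallyEq_of_isIntegralCurveAt
      (hγ₁.isIntegralCurveAt t) (hγ₂.isIntegralCurveAt t))
    h₀

/-- The set `M` consists of the times at which the two branches are merged. -/
theorem generalized_cauchy_time_sticking_general (hv : LocallyLipschitzInState v)
    {M : Set ℝ} (hM : M.Nonempty) {a₁ a₂ : E} {γ : ℝ → E} (hγ : IsIntegralCurve γ v)
    (h₀ : γ t₀ = a₁) :
    ((∃ γ₁ γ₂ : ℝ → E, IsIntegralCurve γ₁ v ∧ IsIntegralCurve γ₂ v ∧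
        EqOn γ₁ γ₂ M ∧ γ₁ t₀ = a₁ ∧ γ₂ t₀ = a₂) ↔ a₁ = a₂) ∧
    (a₁ = a₂ → ∀ γ₁ γ₂ : ℝ → E, IsIntegralCurve γ₁ v → IsIntegralCurve γ₂ v →
      EqOn γ₁ γ₂ M → γ₁ t₀ = a₁ → γ₂ t₀ = a₂ → (∀ t, γ₁ t = γ t) ∧ (∀ t, γ₂ t = γ t)) := by
  refine ⟨⟨?_, ?_⟩, ?_⟩
  · rintro ⟨γ₁, γ₂, hγ₁, hγ₂, merged, rfl, rfl⟩
    obtain ⟨t, ht⟩ := hM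
    exact congrFun (hv.eq_of_isIntegralCurve hγ₁ hγ₂ (merged ht)) t₀
  · rintro rfl
    exact ⟨γ, γ, hγ, hγ, eqOn_refl γ M, h₀, h₀⟩
  · rintro rfl γ₁ γ₂ hγ₁ hγ₂ - h₁ h₂
    exact ⟨congrFun (hv.eq_of_isIntegralCurve hγ₁ hγ (h₁.trans h₀.symm)),
      congrFun (hv.eq_of_isIntegralCurve hγ₂ hγ (h₂.trans h₀.symm))⟩

end IntegralCurve

/-- On the Visser splitting `Split(ℝ, (−∞, 0], 2)` — a time-sticking where two disjoint past
branches merge at time `0` — the generalized Cauchy problem prescribing the value `a₁` at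
time `t_in ≤ 0` on the first past branch and `a₂` at time `t_in` on the second past branch
is well-posed if and only if `a₁ = a₂`; in that case both branch solutions coincide with the
ordinary solution `xT` with `xT(t_in) = a₁`. -/
theorem generalized_cauchy_time_sticking (f : ℝ → ℝ) (hf : ContDiff ℝ (⊤ : ℕ∞) f)
    (t_in : ℝ) (ht : t_in ≤ 0) (a₁ a₂ : ℝ)
    (xT : ℝ → ℝ) (hx : IsGlobalSolution f xT) (hx1 : xT t_in = a₁) :
    ((∃ g₁ g₂ : ℝ → ℝ, IsGlobalSolution f g₁ ∧ IsGlobalSolution f g₂ ∧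
        (∀ t : ℝ, 0 < t → g₁ t = g₂ t) ∧ g₁ t_in = a₁ ∧ g₂ t_in = a₂) ↔ a₁ = a₂) ∧
    (a₁ = a₂ → ∀ g₁ g₂ : ℝ → ℝ, IsGlobalSolution f g₁ → IsGlobalSolution f g₂ →
      (∀ t : ℝ, 0 < t → g₁ t = g₂ t) → g₁ t_in = a₁ → g₂ t_in = a₂ →
      (∀ t : ℝ, g₁ t = xT t) ∧ (∀ t : ℝ, g₂ t = xT t)) := by
  have hv := locallyLipschitzInState_const (hf.of_le (by norm_cast)).locallyLipschitz
  exact generalized_cauchy_time_sticking_general hv nonempty_Ioi hx hx1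
end
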